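/- arXiv:2109.12687 — 3 statements merged into one kernel-verified Lean document; each statement's English description precedes it below -/
import Mathlib

section
/- Let φ : EuclideanSpace ℝ (Fin m) → EuclideanSpace ℝ (Fin (n+1)) be a smooth sphere-valued map (‖φ(x)‖ = 1 for all x) with constant energy density ∑_{i=1}^{m} ‖∂φ/∂xᵢ(x)‖² = c for all x. Then for every x the following two conditions are equivalent: (i) Δ²φ(x) + 2c·Δφ(x) + (2c² + ‖Δφ(x)‖² + 2·∑_{i=1}^{m} ⟨∂(Δφ)/∂xᵢ(x), ∂φ/∂xᵢ(x)⟩)·φ(x) = 0; (ii) Δ²φ(x) + 2c·Δφ(x) + (2c² − ⟨Δ²φ(x), φ(x)⟩)·φ(x) = 0. -/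
open scoped RealInnerProductSpace

/-- Componentwise Laplacian of a map `EuclideanSpace ℝ (Fin m) → F` with respect to the
standard orthonormal coordinates: `Δφ(x) = ∑ i, ∂²φ/∂xᵢ²(x)`. -/
noncomputable def lap {m : ℕ} {F : Type*} [NormedAddCommGroup F] [NormedSpace ℝ F]
    (φ : EuclideanSpace ℝ (Fin m) → F) (x : EuclideanSpace ℝ (Fin m)) : F :=
  ∑ i : Fin m,
    fderiv ℝ (fun y => fderiv ℝ φ y (EuclideanSpace.single i 1)) x (EuclideanSpace.single i 1)

theorem contDiff_partial {m : ℕ} {F : Type*} [NormedAddCommGroup F] [NormedSpace ℝ F]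
    {f : EuclideanSpace ℝ (Fin m) → F} (hf : ContDiff ℝ (⊤ : ℕ∞) f)
    (v : EuclideanSpace ℝ (Fin m)) :
    ContDiff ℝ (⊤ : ℕ∞) (fun y => fderiv ℝ f y v) :=
  (hf.fderiv_right (m := (⊤ : ℕ∞)) (by simp)).clm_apply contDiff_const

theorem contDiff_lap {m : ℕ} {F : Type*} [NormedAddCommGroup F] [NormedSpace ℝ F]
    {f : EuclideanSpace ℝ (Fin m) → F} (hf : ContDiff ℝ (⊤ : ℕ∞) f) :
    ContDiff ℝ (⊤ : ℕ∞) (lap f) := by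
  unfold lap
  exact ContDiff.sum fun i _ => contDiff_partial (contDiff_partial hf _) _

theorem lap_inner {m : ℕ} {F : Type*} [NormedAddCommGroup F] [InnerProductSpace ℝ F]
    {f g : EuclideanSpace ℝ (Fin m) → F} (hf : ContDiff ℝ (⊤ : ℕ∞) f)
    (hg : ContDiff ℝ (⊤ : ℕ∞) g) (x : EuclideanSpace ℝ (Fin m)) :
    lap (fun y => ⟪f y, g y⟫) x = ⟪lap f x, g x⟫ +
      2 * ∑ i : Fin m, ⟪fderiv ℝ f x (EuclideanSpace.single i 1),
        fderiv ℝ g x (EuclideanSpace.single i 1)⟫ + ⟪f x, lap g x⟫ := by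
  have hd : ∀ {h : EuclideanSpace ℝ (Fin m) → F}, ContDiff ℝ (⊤ : ℕ∞) h → Differentiable ℝ h :=
    fun h => h.differentiable (by simp)
  have h1 : ∀ v y, fderiv ℝ (fun y => ⟪f y, g y⟫) y v =
      ⟪f y, fderiv ℝ g y v⟫ + ⟪fderiv ℝ f y v, g y⟫ := fun v y =>
    fderiv_inner_apply ℝ (hd hf y) (hd hg y) v
  unfold lap
  simp only [h1, sum_inner, inner_sum, Finset.mul_sum, ← Finset.sum_add_distrib]
  refine Finset.sum_congr rfl fun i _ => ?_
  have hf' := hd (contDiff_partial hf (EuclideanSpace.single i 1))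
  have hg' := hd (contDiff_partial hg (EuclideanSpace.single i 1))
  rw [fderiv_fun_add ((hd hf x).inner ℝ (hg' x)) ((hf' x).inner ℝ (hd hg x)),
    ContinuousLinearMap.add_apply, fderiv_inner_apply ℝ (hd hf x) (hg' x),
    fderiv_inner_apply ℝ (hf' x) (hd hg x)]
  ring

theorem lap_const {m : ℕ} (a : ℝ) (x : EuclideanSpace ℝ (Fin m)) :
    lap (fun _ => a) x = 0 := by
  simp [lap]

theorem biharmonic_eq_iff_simplified {m n : ℕ}
    (φ : EuclideanSpace ℝ (Fin m) → EuclideanSpace ℝ (Fin (n + 1)))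
    (hφ : ContDiff ℝ (⊤ : ℕ∞) φ) (hsphere : ∀ x, ‖φ x‖ = 1) (c : ℝ)
    (henergy : ∀ x, ∑ i : Fin m, ‖fderiv ℝ φ x (EuclideanSpace.single i 1)‖ ^ 2 = c)
    (x : EuclideanSpace ℝ (Fin m)) :
    (lap (lap φ) x + (2 * c) • lap φ x +
        (2 * c ^ 2 + ‖lap φ x‖ ^ 2 +
          2 * ∑ i : Fin m,
            ⟪fderiv ℝ (lap φ) x (EuclideanSpace.single i 1),
              fderiv ℝ φ x (EuclideanSpace.single i 1)⟫) • φ x = 0) ↔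
      (lap (lap φ) x + (2 * c) • lap φ x +
        (2 * c ^ 2 - ⟪lap (lap φ) x, φ x⟫) • φ x = 0) := by
  have h1 : ∀ y, ⟪lap φ y, φ y⟫ = -c := by
    intro y
    have h := lap_inner hφ hφ y
    simp only [real_inner_self_eq_norm_sq, hsphere, lap_const, henergy] at h
    rw [real_inner_comm (lap φ y) (φ y)] at h
    linarith
  have h2 := lap_inner (contDiff_lap hφ) hφ x
  simp only [h1, lap_const, real_inner_self_eq_norm_sq] at h2
  have h3 : 2 * c ^ 2 + ‖lap φ x‖ ^ 2 +
          2 * ∑ i : Fin m,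
            ⟪fderiv ℝ (lap φ) x (EuclideanSpace.single i 1),
              fderiv ℝ φ x (EuclideanSpace.single i 1)⟫ =
      2 * c ^ 2 - ⟪lap (lap φ) x, φ x⟫ := by
    linarith
  rw [h3]
end

section
/- Let φ : EuclideanSpace ℝ (Fin m) → EuclideanSpace ℝ (Fin (n+1)) be a smooth sphere-valued map (‖φ(x)‖ = 1 for all x) with constant energy density ∑_{i=1}^{m} ‖∂φ/∂xᵢ(x)‖² = c for all x, which satisfies the biharmonic equation Δ²φ(x) + 2c·Δφ(x) + (2c² − ⟨Δ²φ(x), φ(x)⟩)·φ(x) = 0 for all x. If moreover φ is a bi-eigenmap, i.e. there is a function λ : EuclideanSpace ℝ (Fin m) → ℝ with Δ²φ(x) = λ(x)·φ(x) for all x, then Δφ(x) = −c·φ(x) for all x (φ is an eigenmap, hence harmonic as a map into the sphere), and consequently λ(x) = c² for all x. -/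
open scoped RealInnerProductSpace

theorem biharmonic_bieigenmap_is_eigenmap {m n : ℕ}
    (φ : EuclideanSpace ℝ (Fin m) → EuclideanSpace ℝ (Fin (n + 1)))
    (hφ : ContDiff ℝ (⊤ : ℕ∞) φ) (hsphere : ∀ x, ‖φ x‖ = 1) (c : ℝ)
    (henergy : ∀ x, ∑ i : Fin m, ‖fderiv ℝ φ x (EuclideanSpace.single i 1)‖ ^ 2 = c)
    (hbiharm : ∀ x, lap (lap φ) x + (2 * c) • lap φ x +
        (2 * c ^ 2 - ⟪lap (lap φ) x, φ x⟫) • φ x = 0)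
    (lam : EuclideanSpace ℝ (Fin m) → ℝ)
    (hbieigen : ∀ x, lap (lap φ) x = lam x • φ x) :
    (∀ x, lap φ x = (-c) • φ x) ∧ (∀ x, lam x = c ^ 2) := by
  have hin : ∀ x, ⟪φ x, φ x⟫ = 1 := fun x => by
    rw [real_inner_self_eq_norm_sq, hsphere]; norm_num
  have h1 : ∀ x, lap φ x = (-c) • φ x := by
    intro x
    by_cases hc : c = 0
    · have hz : ∀ y, ∀ i : Fin m, fderiv ℝ φ y (EuclideanSpace.single i 1) = 0 := by
        intro y i
        have h := henergy y
        rw [hc, Finset.sum_eq_zero_iff_of_nonneg (fun i _ => by positivity)] at h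
        simpa using h i (Finset.mem_univ i)
      simp [lap, hz, hc]
    · have h := hbiharm x
      rw [hbieigen x, inner_smul_left, hin x] at h
      have h2 : (2 * c) • (lap φ x + c • φ x) = 0 := by
        rw [← h]
        simp only [conj_trivial]
        module
      have h3 := (smul_eq_zero.mp h2).resolve_left (by simpa using hc)
      rw [eq_neg_of_add_eq_zero_left h3, neg_smul]
  refine ⟨h1, fun x => ?_⟩
  have hl : lap φ = fun y => (-c) • φ y := funext h1
  have h2 : lap (fun y => (-c) • φ y) x = (-c) • lap φ x := by
    have hd : Differentiable ℝ φ := hφ.differentiable (by simp)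
    have hd2 : Differentiable ℝ (fderiv ℝ φ) :=
      (hφ.fderiv_right (m := 1) (WithTop.coe_le_coe.2 (le_top : ((1 : ℕ∞) + 1) ≤ ⊤))).differentiable (by simp)
    unfold lap
    rw [Finset.smul_sum]
    refine Finset.sum_congr rfl fun i _ => ?_
    have e : (fun y => fderiv ℝ (fun y => (-c) • φ y) y (EuclideanSpace.single i 1))
        = fun y => (-c) • fderiv ℝ φ y (EuclideanSpace.single i 1) := by
      funext y
      rw [fderiv_fun_const_smul (hd y)]; rfl
    rw [e, fderiv_fun_const_smul (by fun_prop)]; rfl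
  have h3 := hbieigen x
  rw [hl, h2, h1 x] at h3
  have h4 := congrArg (fun v => ⟪v, φ x⟫) h3
  simp only [inner_smul_left, hin x, conj_trivial] at h4
  linarith
end

section
/- Let φ : EuclideanSpace ℝ (Fin m) → EuclideanSpace ℝ (Fin (n+1)) be a smooth sphere-valued map (‖φ(x)‖ = 1 for all x) with constant energy density ∑_{i=1}^{m} ‖∂φ/∂xᵢ(x)‖² = c for all x, which satisfies the biharmonic equation Δ²φ(x) + 2c·Δφ(x) + (2c² − ⟨Δ²φ(x), φ(x)⟩)·φ(x) = 0 for all x. If moreover φ is a buckling eigenmap, i.e. there is a function μ : EuclideanSpace ℝ (Fin m) → ℝ with Δ²φ(x) = −μ(x)·Δφ(x) for all x, then for every x either μ(x) = 2c or Δφ(x) + c·φ(x) = 0. -/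
open scoped RealInnerProductSpace

theorem biharmonic_buckling_eigenmap {m n : ℕ}
    (φ : EuclideanSpace ℝ (Fin m) → EuclideanSpace ℝ (Fin (n + 1)))
    (hφ : ContDiff ℝ (⊤ : ℕ∞) φ) (hsphere : ∀ x, ‖φ x‖ = 1) (c : ℝ)
    (henergy : ∀ x, ∑ i : Fin m, ‖fderiv ℝ φ x (EuclideanSpace.single i 1)‖ ^ 2 = c)
    (hbiharm : ∀ x, lap (lap φ) x + (2 * c) • lap φ x +
        (2 * c ^ 2 - ⟪lap (lap φ) x, φ x⟫) • φ x = 0)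
    (μ : EuclideanSpace ℝ (Fin m) → ℝ)
    (hbuckling : ∀ x, lap (lap φ) x = -(μ x) • lap φ x) :
    ∀ x, μ x = 2 * c ∨ lap φ x + c • φ x = 0 := by
  intro x
  have hd : Differentiable ℝ φ := hφ.differentiable (by simp)
  have h1 : ∀ v y, ⟪fderiv ℝ φ y v, φ y⟫ = 0 := by
    intro v y
    have hc : (fun z => ⟪φ z, φ z⟫) = fun _ => (1 : ℝ) := by
      funext z
      rw [real_inner_self_eq_norm_sq, hsphere z, one_pow]
    have h := fderiv_inner_apply ℝ (hd y) (hd y) v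
    rw [hc] at h
    simp only [fderiv_fun_const, Pi.zero_apply, zero_apply] at h
    rw [real_inner_comm] at h
    linarith
  have h2 : ∀ v y, ⟪fderiv ℝ (fun z => fderiv ℝ φ z v) y v, φ y⟫ = -‖fderiv ℝ φ y v‖ ^ 2 := by
    intro v y
    have hd2 : Differentiable ℝ (fun z => fderiv ℝ φ z v) := by
      have h3 : Differentiable ℝ (fderiv ℝ φ) :=
        (hφ.fderiv_right (m := 1) (WithTop.coe_le_coe.mpr (le_top : ((1 + 1 : ℕ∞)) ≤ ⊤))).differentiable (by simp)
      exact fun z => (h3 z).clm_apply (differentiableAt_const v)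
    have hc : (fun z => ⟪fderiv ℝ φ z v, φ z⟫) = fun _ => (0 : ℝ) := by
      funext z
      exact h1 v z
    have h := fderiv_inner_apply ℝ (hd2 y) (hd y) v
    rw [hc] at h
    simp only [fderiv_fun_const, Pi.zero_apply, zero_apply] at h
    rw [real_inner_self_eq_norm_sq] at h
    linarith
  have h3 : ⟪lap φ x, φ x⟫ = -c := by
    unfold lap
    rw [sum_inner, ← henergy x, ← Finset.sum_neg_distrib]
    exact Finset.sum_congr rfl fun i _ => h2 _ x
  have h4 := hbiharm x
  rw [hbuckling x, inner_smul_left, h3] at h4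
  have h5 : (2 * c - μ x) • (lap φ x + c • φ x) = 0 := by
    rw [← h4]
    simp only [conj_trivial]
    module
  rcases smul_eq_zero.mp h5 with h | h
  · left
    linarith
  · right
    exact h
end
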